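/- (Milman–Pajor inequality) Let K and L be convex bodies in ℝ^n with the same center of mass. Then vrad(K ∩ L) · vrad(K − L) ≥ vrad(K) · vrad(L), where K − L = { x − y : x ∈ K, y ∈ L } is the Minkowski sum of K and −L. -/

import Mathlib

/-!
Let `f z = vol (K ∩ (z + L))`. Up to normalization, `f` is the density of `x - y` for `(x, y)`
uniformly distributed on `K × L`; hence `f` lives on `D = K - L`, `∫ f = vol K * vol L`, and the
barycenter of `f` is the difference of the barycenters of `K` and `L`, which is `0`.

By the Brunn–Minkowski inequality, `g = f ^ (1 / n)` is concave on `D`, so Jensen's inequality for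
the law of `x - y` gives `∫_D g ^ (n + 1) ≤ g 0 * ∫_D g ^ n`. On the other hand, integrating the
weighted AM–GM inequality `(n + 1) m g ^ n ≤ n g ^ (n + 1) + m ^ (n + 1)` with `m ^ n` equal to the
mean of `f` over `D` gives `m * ∫_D g ^ n ≤ ∫_D g ^ (n + 1)`. Therefore `m ≤ g 0`, which
says `vol K * vol L ≤ vol (K ∩ L) * vol (K - L)` (`volume_mul_volume_le`).

The Brunn–Minkowski inequality (`brunn_minkowski`) is deduced from the Prékopa–Leindler inequality
(`prekopa_leindler`), which is proved by induction on the dimension. The one-dimensional case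
integrates `vol A + vol B ≤ vol (A + B)` over the level sets of functions with equal suprema.
-/

open MeasureTheory Metric
open scoped RealInnerProductSpace Pointwise

noncomputable section

/-- The uniform probability measure on the unit Euclidean sphere of `ℝ^n`. -/
def sphereUniform (n : ℕ) : Measure (sphere (0 : EuclideanSpace ℝ (Fin n)) 1) :=
  (((volume : Measure (EuclideanSpace ℝ (Fin n))).toSphere Set.univ)⁻¹) •
    (volume : Measure (EuclideanSpace ℝ (Fin n))).toSphere

/-- The mean width `w(K) = ∫_{S^{n-1}} max_{x ∈ K} ⟪x, u⟫ dσ(u)` of a subset of `ℝ^n`,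
with `σ` the uniform probability measure on the unit sphere. -/
def meanWidth {n : ℕ} (K : Set (EuclideanSpace ℝ (Fin n))) : ℝ :=
  ∫ u, sSup ((fun x => ⟪x, (u : EuclideanSpace ℝ (Fin n))⟫) '' K) ∂(sphereUniform n)

/-- The volume radius `vrad(K) = (vol K / vol Bⁿ)^{1/n}` of a subset of `ℝ^n`. -/
def volRad {n : ℕ} (K : Set (EuclideanSpace ℝ (Fin n))) : ℝ :=
  ((volume K).toReal / (volume (ball (0 : EuclideanSpace ℝ (Fin n)) 1)).toReal) ^ ((n : ℝ)⁻¹)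

/-- The center of mass (barycenter) of a subset of `ℝ^n`. -/
def centerOfMass {n : ℕ} (K : Set (EuclideanSpace ℝ (Fin n))) : EuclideanSpace ℝ (Fin n) :=
  (volume K).toReal⁻¹ • ∫ x in K, x ∂volume

end

open scoped ENNReal
open Set Filter Topology

/-! ### The one-dimensional Prékopa–Leindler inequality -/

/-- The translates `A + min B` and `max A + B` inside `A + B` meet in at most one point. -/
lemma volume_add_le_real_compact {A B : Set ℝ} (hA : IsCompact A) (hB : IsCompact B)
    (hA0 : A.Nonempty) (hB0 : B.Nonempty) : volume A + volume B ≤ volume (A + B) := by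
  set a := sSup A with ha
  set b := sInf B with hb
  have haA : a ∈ A := hA.sSup_mem hA0
  have hbB : b ∈ B := hB.sInf_mem hB0
  have hle : ∀ x ∈ A, x ≤ a := fun x hx => le_csSup hA.bddAbove hx
  have hge : ∀ y ∈ B, b ≤ y := fun y hy => csInf_le hB.bddBelow hy
  have h1 : volume ((fun x => b + x) '' A) = volume A := by
    rw [image_add_left, measure_preimage_add]
  have h2 : volume ((fun x => a + x) '' B) = volume B := by
    rw [image_add_left, measure_preimage_add]
  have hcB : IsCompact ((fun x => a + x) '' B) := hB.image (by fun_prop)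
  have hdisj : AEDisjoint volume ((fun x => b + x) '' A) ((fun x => a + x) '' B) := by
    refine measure_mono_null (t := {a + b}) ?_ (by simp)
    rintro z ⟨⟨x, hx, rfl⟩, ⟨y, hy, hxy⟩⟩
    have := hle x hx
    have := hge y hy
    simp only [mem_singleton_iff] at *
    linarith
  rw [← h1, ← h2, ← measure_union₀ hcB.measurableSet.nullMeasurableSet hdisj]
  refine measure_mono (union_subset ?_ ?_)
  · rintro _ ⟨x, hx, rfl⟩
    exact ⟨x, hx, b, hbB, add_comm _ _⟩
  · rintro _ ⟨y, hy, rfl⟩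
    exact ⟨a, haA, y, hy, rfl⟩

lemma volume_eq_iSup_compact_nonempty {A : Set ℝ} (hA : MeasurableSet A) :
    volume A = ⨆ K : {K : Set ℝ // K ⊆ A ∧ IsCompact K ∧ K.Nonempty}, volume (K : Set ℝ) := by
  refine le_antisymm ?_ (iSup_le fun K => measure_mono K.2.1)
  rw [hA.measure_eq_iSup_isCompact]
  refine iSup_le fun K => iSup_le fun hKA => iSup_le fun hK => ?_
  rcases K.eq_empty_or_nonempty with rfl | hK0
  · simp
  · exact le_iSup (fun K : {K : Set ℝ // K ⊆ A ∧ IsCompact K ∧ K.Nonempty} =>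
      volume (K : Set ℝ)) ⟨K, hKA, hK, hK0⟩

/-- The one-dimensional Brunn–Minkowski inequality. The target `C` is any set containing
`s A + t B`, since the latter need not be measurable. -/
lemma brunn_minkowski_real {A B C : Set ℝ} (hA : MeasurableSet A) (hB : MeasurableSet B)
    (hA0 : A.Nonempty) (hB0 : B.Nonempty) {s t : ℝ} (hs : 0 ≤ s) (ht : 0 ≤ t)
    (hC : ∀ x ∈ A, ∀ y ∈ B, s * x + t * y ∈ C) :
    ENNReal.ofReal s * volume A + ENNReal.ofReal t * volume B ≤ volume C := by
  rw [volume_eq_iSup_compact_nonempty hA, volume_eq_iSup_compact_nonempty hB]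
  have : Nonempty {K : Set ℝ // K ⊆ A ∧ IsCompact K ∧ K.Nonempty} :=
    let ⟨a, ha⟩ := hA0
    ⟨⟨{a}, by simpa using ha, isCompact_singleton, singleton_nonempty a⟩⟩
  have : Nonempty {K : Set ℝ // K ⊆ B ∧ IsCompact K ∧ K.Nonempty} :=
    let ⟨a, ha⟩ := hB0
    ⟨⟨{a}, by simpa using ha, isCompact_singleton, singleton_nonempty a⟩⟩
  rw [ENNReal.mul_iSup, ENNReal.mul_iSup, ENNReal.iSup_add]
  refine iSup_le fun K => ?_
  rw [ENNReal.add_iSup]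
  refine iSup_le fun L => ?_
  have hK := K.2
  have hL := L.2
  have h := volume_add_le_real_compact (hK.2.1.smul s) (hL.2.1.smul t)
    (hK.2.2.smul_set) (hL.2.2.smul_set)
  rw [Measure.addHaar_smul, Measure.addHaar_smul] at h
  simp only [Module.finrank_self, pow_one, abs_of_nonneg hs, abs_of_nonneg ht] at h
  refine h.trans (measure_mono ?_)
  rintro _ ⟨_, ⟨x, hx, rfl⟩, _, ⟨y, hy, rfl⟩, rfl⟩
  exact hC x (hK.1 hx) y (hL.1 hy)

/-- The additive one-dimensional Prékopa–Leindler inequality for functions of supremum `1`, by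
integrating the Brunn–Minkowski inequality over the level sets. -/
lemma prekopa_leindler_real_normalized {F G H : ℝ → ℝ} (hF : Measurable F) (hG : Measurable G)
    (hH : Measurable H) (hF0 : ∀ x, 0 ≤ F x) (hG0 : ∀ x, 0 ≤ G x) (hH0 : ∀ x, 0 ≤ H x)
    (hF1 : ∀ x, F x ≤ 1) (hG1 : ∀ x, G x ≤ 1)
    (hFs : ∀ r < 1, ∃ x, r < F x) (hGs : ∀ r < 1, ∃ x, r < G x)
    {s t : ℝ} (hs : 0 ≤ s) (ht : 0 ≤ t)
    (h : ∀ r, 0 < r → r < 1 → ∀ x y, r < F x → r < G y → r < H (s * x + t * y)) :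
    ENNReal.ofReal s * (∫⁻ x, ENNReal.ofReal (F x)) +
      ENNReal.ofReal t * (∫⁻ x, ENNReal.ofReal (G x)) ≤ ∫⁻ x, ENNReal.ofReal (H x) := by
  have hanti : ∀ F : ℝ → ℝ, Measurable (fun r : ℝ => volume {a | r < F a}) := fun F =>
    Antitone.measurable fun r r' hrr => measure_mono fun a (ha : r' < F a) => hrr.trans_lt ha
  rw [lintegral_eq_lintegral_meas_lt volume (ae_of_all _ hF0) hF.aemeasurable,
    lintegral_eq_lintegral_meas_lt volume (ae_of_all _ hG0) hG.aemeasurable,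
    lintegral_eq_lintegral_meas_lt volume (ae_of_all _ hH0) hH.aemeasurable,
    ← lintegral_const_mul _ (hanti F), ← lintegral_const_mul _ (hanti G),
    ← lintegral_add_left ((hanti F).const_mul _)]
  refine setLIntegral_mono' measurableSet_Ioi fun r (hr : 0 < r) => ?_
  rcases lt_or_ge r 1 with hr1 | hr1
  · exact brunn_minkowski_real (measurableSet_lt measurable_const hF)
      (measurableSet_lt measurable_const hG) (hFs r hr1) (hGs r hr1) hs ht
      fun x hx y hy => h r hr hr1 x y hx hy
  · have e1 : {a | r < F a} = ∅ := by
      ext x; simpa using (hF1 x).trans hr1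
    have e2 : {a | r < G a} = ∅ := by
      ext x; simpa using (hG1 x).trans hr1
    simp [e1, e2]

lemma ennreal_geom_mean_le {s t : ℝ} (hs : 0 < s) (ht : 0 < t) (hst : s + t = 1) (x y : ℝ≥0∞) :
    x ^ s * y ^ t ≤ ENNReal.ofReal s * x + ENNReal.ofReal t * y := by
  have hs' : ENNReal.ofReal s ≠ 0 := by simpa using hs
  have ht' : ENNReal.ofReal t ≠ 0 := by simpa using ht
  rcases eq_or_ne x ⊤ with rfl | hx
  · simp [ENNReal.mul_top hs']
  rcases eq_or_ne y ⊤ with rfl | hy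
  · simp [ENNReal.mul_top ht']
  lift x to NNReal using hx
  lift y to NNReal using hy
  lift s to NNReal using hs.le
  lift t to NNReal using ht.le
  have := NNReal.geom_mean_le_arith_mean2_weighted s t x y (by exact_mod_cast hst)
  rw [ENNReal.ofReal_coe_nnreal, ENNReal.ofReal_coe_nnreal,
    ← ENNReal.coe_rpow_of_nonneg _ hs.le, ← ENNReal.coe_rpow_of_nonneg _ ht.le]
  exact_mod_cast this

/-- The case of bounded functions, by dividing `f` and `g` by their suprema `a` and `b`, and `h`
by `a ^ s * b ^ t`; cutting the latter off at `1` keeps it real-valued. -/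
lemma prekopa_leindler_real_bounded {f g h : ℝ → ℝ≥0∞} (hf : Measurable f) (hg : Measurable g)
    (hh : Measurable h) {s t : ℝ} (hs : 0 < s) (ht : 0 < t) (hst : s + t = 1)
    (hfb : ⨆ x, f x ≠ ⊤) (hgb : ⨆ x, g x ≠ ⊤)
    (H : ∀ x y, f x ^ s * g y ^ t ≤ h (s * x + t * y)) :
    (∫⁻ x, f x) ^ s * (∫⁻ x, g x) ^ t ≤ ∫⁻ x, h x := by
  set a := ⨆ x, f x with ha
  set b := ⨆ x, g x with hb
  rcases eq_or_ne a 0 with ha0 | ha0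
  · have : ∀ x, f x = 0 := fun x => le_antisymm (ha0 ▸ le_iSup f x) bot_le
    simp [this, hs]
  rcases eq_or_ne b 0 with hb0 | hb0
  · have : ∀ x, g x = 0 := fun x => le_antisymm (hb0 ▸ le_iSup g x) bot_le
    simp [this, ht]
  set c := a ^ s * b ^ t with hc
  have has : a ^ s ≠ 0 := by simp [ENNReal.rpow_eq_zero_iff, ha0, hfb]
  have hbt : b ^ t ≠ 0 := by simp [ENNReal.rpow_eq_zero_iff, hb0, hgb]
  have has' : a ^ s ≠ ⊤ := ENNReal.rpow_ne_top_of_nonneg hs.le hfb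
  have hbt' : b ^ t ≠ ⊤ := ENNReal.rpow_ne_top_of_nonneg ht.le hgb
  have hc0 : c ≠ 0 := mul_ne_zero has hbt
  have hct : c ≠ ⊤ := ENNReal.mul_ne_top has' hbt'
  have hf1 : ∀ x, f x / a ≤ 1 := fun x => ENNReal.div_le_of_le_mul (by simpa using le_iSup f x)
  have hg1 : ∀ x, g x / b ≤ 1 := fun x => ENNReal.div_le_of_le_mul (by simpa using le_iSup g x)
  have hft : ∀ x, f x / a ≠ ⊤ := fun x => ((hf1 x).trans_lt ENNReal.one_lt_top).ne
  have hgt : ∀ x, g x / b ≠ ⊤ := fun x => ((hg1 x).trans_lt ENNReal.one_lt_top).ne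
  have hht : ∀ x, min (h x / c) 1 ≠ ⊤ := fun x =>
    ((min_le_right _ _).trans_lt ENNReal.one_lt_top).ne
  have key := prekopa_leindler_real_normalized (F := fun x => (f x / a).toReal)
    (G := fun x => (g x / b).toReal) (H := fun x => (min (h x / c) 1).toReal)
    (by fun_prop) (by fun_prop) (by fun_prop) (fun _ => ENNReal.toReal_nonneg)
    (fun _ => ENNReal.toReal_nonneg) (fun _ => ENNReal.toReal_nonneg)
    (fun x => ENNReal.toReal_le_of_le_ofReal zero_le_one (by simpa using hf1 x))
    (fun x => ENNReal.toReal_le_of_le_ofReal zero_le_one (by simpa using hg1 x))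
    ?_ ?_ hs.le ht.le ?_
  · simp only [ENNReal.ofReal_toReal (hft _), ENNReal.ofReal_toReal (hgt _),
      ENNReal.ofReal_toReal (hht _)] at key
    have key2 := (ennreal_geom_mean_le hs ht hst _ _).trans key
    have e1 : ∫⁻ x, f x = a * ∫⁻ x, f x / a := by
      rw [← lintegral_const_mul _ (by fun_prop)]
      exact lintegral_congr fun x => (ENNReal.mul_div_cancel ha0 hfb).symm
    have e2 : ∫⁻ x, g x = b * ∫⁻ x, g x / b := by
      rw [← lintegral_const_mul _ (by fun_prop)]
      exact lintegral_congr fun x => (ENNReal.mul_div_cancel hb0 hgb).symm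
    have e3 : ∫⁻ x, h x = c * ∫⁻ x, h x / c := by
      rw [← lintegral_const_mul _ (by fun_prop)]
      exact lintegral_congr fun x => (ENNReal.mul_div_cancel hc0 hct).symm
    rw [e1, e2, e3, ENNReal.mul_rpow_of_nonneg _ _ hs.le, ENNReal.mul_rpow_of_nonneg _ _ ht.le,
      mul_mul_mul_comm]
    refine mul_le_mul_right (key2.trans (lintegral_mono fun x => min_le_left _ _)) _
  · intro r hr
    rcases lt_or_ge r 0 with hr0 | hr0
    · exact ⟨0, hr0.trans_le ENNReal.toReal_nonneg⟩
    have : ENNReal.ofReal r * a < a := by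
      conv_rhs => rw [← one_mul a]
      exact (ENNReal.mul_lt_mul_iff_left ha0 hfb).2 (by simpa using hr)
    obtain ⟨x, hx⟩ := lt_iSup_iff.1 this
    refine ⟨x, (ENNReal.ofReal_lt_iff_lt_toReal hr0 (hft x)).1 ?_⟩
    exact (ENNReal.lt_div_iff_mul_lt (Or.inl ha0) (Or.inl hfb)).2 hx
  · intro r hr
    rcases lt_or_ge r 0 with hr0 | hr0
    · exact ⟨0, hr0.trans_le ENNReal.toReal_nonneg⟩
    have : ENNReal.ofReal r * b < b := by
      conv_rhs => rw [← one_mul b]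
      exact (ENNReal.mul_lt_mul_iff_left hb0 hgb).2 (by simpa using hr)
    obtain ⟨x, hx⟩ := lt_iSup_iff.1 this
    refine ⟨x, (ENNReal.ofReal_lt_iff_lt_toReal hr0 (hgt x)).1 ?_⟩
    exact (ENNReal.lt_div_iff_mul_lt (Or.inl hb0) (Or.inl hgb)).2 hx
  · intro r hr hr1 x y hx hy
    rw [← ENNReal.ofReal_lt_iff_lt_toReal hr.le (hft x)] at hx
    rw [← ENNReal.ofReal_lt_iff_lt_toReal hr.le (hgt y)] at hy
    rw [← ENNReal.ofReal_lt_iff_lt_toReal hr.le (hht _)]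
    refine lt_min ?_ (by simpa using hr1)
    have e : ENNReal.ofReal r = ENNReal.ofReal r ^ s * ENNReal.ofReal r ^ t := by
      rw [← ENNReal.rpow_add_of_nonneg _ _ hs.le ht.le, hst, ENNReal.rpow_one]
    rw [e]
    refine (ENNReal.mul_lt_mul (ENNReal.rpow_lt_rpow hx hs) (ENNReal.rpow_lt_rpow hy ht)).trans_le ?_
    rw [ENNReal.div_rpow_of_nonneg _ _ hs.le, ENNReal.div_rpow_of_nonneg _ _ ht.le,
      ← ENNReal.mul_div_mul_comm (Or.inr hbt') (Or.inr hbt)]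
    exact ENNReal.div_le_div_right (H x y) _

/-- The one-dimensional Prékopa–Leindler inequality, from the bounded case by truncation. -/
lemma prekopa_leindler_real {f g h : ℝ → ℝ≥0∞} (hf : Measurable f) (hg : Measurable g)
    (hh : Measurable h) {s t : ℝ} (hs : 0 < s) (ht : 0 < t) (hst : s + t = 1)
    (H : ∀ x y, f x ^ s * g y ^ t ≤ h (s * x + t * y)) :
    (∫⁻ x, f x) ^ s * (∫⁻ x, g x) ^ t ≤ ∫⁻ x, h x := by
  rcases eq_or_ne (∫⁻ x, f x) 0 with hf0 | hf0
  · simp [hf0, hs]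
  rcases eq_or_ne (∫⁻ x, g x) 0 with hg0 | hg0
  · simp [hg0, ht]
  have tr : ∀ f : ℝ → ℝ≥0∞, Measurable f → Tendsto (fun k : ℕ => ∫⁻ x, min (f x) k) atTop
      (𝓝 (∫⁻ x, f x)) := by
    intro f hf
    refine lintegral_tendsto_of_tendsto_of_monotone (fun k => by fun_prop)
      (ae_of_all _ fun x k l hkl => min_le_min le_rfl (by exact_mod_cast hkl))
      (ae_of_all _ fun x => ?_)
    have := (tendsto_const_nhds (x := f x)).min ENNReal.tendsto_nat_nhds_top
    simpa using this
  have lim := ENNReal.Tendsto.mul ((ENNReal.continuous_rpow_const (y := s)).continuousAt.tendsto.comp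
      (tr f hf)) (Or.inl (by simp [ENNReal.rpow_eq_zero_iff, hf0, hs.le]))
      ((ENNReal.continuous_rpow_const (y := t)).continuousAt.tendsto.comp
      (tr g hg)) (Or.inl (by simp [ENNReal.rpow_eq_zero_iff, hg0, ht.le]))
  refine le_of_tendsto' lim fun k => ?_
  have hb : ∀ f : ℝ → ℝ≥0∞, ⨆ x, min (f x) (k : ℝ≥0∞) ≠ ⊤ := fun f =>
    ((iSup_le fun x => min_le_right _ _).trans_lt (ENNReal.natCast_lt_top k)).ne
  refine prekopa_leindler_real_bounded (by fun_prop) (by fun_prop) hh hs ht hst (hb f) (hb g) ?_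
  exact fun x y => le_trans (mul_le_mul' (ENNReal.rpow_le_rpow (min_le_left _ _) hs.le)
    (ENNReal.rpow_le_rpow (min_le_left _ _) ht.le)) (H x y)

/-! ### Prékopa–Leindler and Brunn–Minkowski in `ℝⁿ` -/

/-- The Prékopa–Leindler inequality on `ℝⁿ`: the marginals in the first coordinate satisfy the
one-dimensional hypothesis by the inequality in dimension `n - 1`. -/
theorem prekopa_leindler (n : ℕ) {s t : ℝ} (hs : 0 < s) (ht : 0 < t) (hst : s + t = 1)
    {f g h : (Fin n → ℝ) → ℝ≥0∞} (hf : Measurable f) (hg : Measurable g) (hh : Measurable h)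
    (H : ∀ x y, f x ^ s * g y ^ t ≤ h (s • x + t • y)) :
    (∫⁻ x, f x) ^ s * (∫⁻ x, g x) ^ t ≤ ∫⁻ x, h x := by
  induction n with
  | zero =>
    have e : ∀ φ : (Fin 0 → ℝ) → ℝ≥0∞, ∫⁻ x, φ x = φ 0 := fun φ => by
      rw [Measure.volume_pi_eq_dirac 0, lintegral_dirac]
    rw [e, e, e]
    simpa using H 0 0
  | succ n ih =>
    have hcons : ∀ p : ℝ × (Fin n → ℝ), (MeasurableEquiv.piFinSuccAbove
        (fun _ : Fin (n + 1) => ℝ) 0).symm p = (Fin.cons p.1 p.2 : Fin (n + 1) → ℝ) := fun p =>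
      Fin.insertNth_zero' p.1 p.2
    have hm : Measurable fun p : ℝ × (Fin n → ℝ) => (Fin.cons p.1 p.2 : Fin (n + 1) → ℝ) := by
      simp_rw [← hcons]
      exact (MeasurableEquiv.piFinSuccAbove (fun _ : Fin (n + 1) => ℝ) 0).symm.measurable
    have e : ∀ φ : (Fin (n + 1) → ℝ) → ℝ≥0∞, Measurable φ →
        ∫⁻ x, φ x = ∫⁻ x : ℝ, ∫⁻ y : Fin n → ℝ, φ (Fin.cons x y) := by
      intro φ hφ
      rw [← ((volume_preserving_piFinSuccAbove (fun _ : Fin (n + 1) => ℝ) 0).symm).lintegral_comp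
        hφ, Measure.volume_eq_prod]
      simp_rw [hcons]
      exact lintegral_prod _ (hφ.comp hm).aemeasurable
    rw [e f hf, e g hg, e h hh]
    refine prekopa_leindler_real (Measurable.lintegral_prod_right' (hf.comp hm))
      (Measurable.lintegral_prod_right' (hg.comp hm))
      (Measurable.lintegral_prod_right' (hh.comp hm)) hs ht hst fun x y => ?_
    refine ih (hf.comp (hm.comp measurable_prodMk_left)) (hg.comp (hm.comp measurable_prodMk_left))
      (hh.comp (hm.comp measurable_prodMk_left)) fun u v => ?_
    refine (H _ _).trans (le_of_eq (congrArg h ?_))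
    funext i
    refine Fin.cases ?_ (fun j => ?_) i <;> simp

/-- The multiplicative Brunn–Minkowski inequality for compact sets. -/
lemma brunn_minkowski_mul {n : ℕ} {A B : Set (EuclideanSpace ℝ (Fin n))} (hA : IsCompact A)
    (hB : IsCompact B) {s t : ℝ} (hs : 0 < s) (ht : 0 < t) (hst : s + t = 1) :
    volume A ^ s * volume B ^ t ≤ volume (s • A + t • B) := by
  have hC : IsCompact (s • A + t • B) := (hA.smul s).add (hB.smul t)
  have mp := PiLp.volume_preserving_toLp (Fin n)
  have key := prekopa_leindler n hs ht hst
    (f := (WithLp.toLp 2 ⁻¹' A).indicator 1) (g := (WithLp.toLp 2 ⁻¹' B).indicator 1)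
    (h := (WithLp.toLp 2 ⁻¹' (s • A + t • B)).indicator 1)
    (measurable_one.indicator (mp.measurable hA.measurableSet))
    (measurable_one.indicator (mp.measurable hB.measurableSet))
    (measurable_one.indicator (mp.measurable hC.measurableSet)) ?_
  · rwa [lintegral_indicator_one (mp.measurable hA.measurableSet),
      lintegral_indicator_one (mp.measurable hB.measurableSet),
      lintegral_indicator_one (mp.measurable hC.measurableSet),
      mp.measure_preimage hA.measurableSet.nullMeasurableSet,
      mp.measure_preimage hB.measurableSet.nullMeasurableSet,
      mp.measure_preimage hC.measurableSet.nullMeasurableSet] at key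
  · intro x y
    by_cases hx : WithLp.toLp 2 x ∈ A
    · by_cases hy : WithLp.toLp 2 y ∈ B
      · have : s • x + t • y ∈ WithLp.toLp 2 ⁻¹' (s • A + t • B) :=
          ⟨s • WithLp.toLp 2 x, ⟨_, hx, rfl⟩, t • WithLp.toLp 2 y, ⟨_, hy, rfl⟩, rfl⟩
        simp [indicator, hx, hy, this]
      · simp [indicator, hy, ht]
    · simp [indicator, hx, hs]

lemma volume_smul_rpow {n : ℕ} (hn : 0 < n) (A : Set (EuclideanSpace ℝ (Fin n))) {a : ℝ}
    (ha : 0 ≤ a) :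
    volume.real (a • A) ^ (n : ℝ)⁻¹ = a * volume.real A ^ (n : ℝ)⁻¹ := by
  rw [Measure.real, Measure.addHaar_smul, finrank_euclideanSpace_fin, abs_of_nonneg (by positivity),
    ENNReal.toReal_mul, ENNReal.toReal_ofReal (by positivity),
    Real.mul_rpow (by positivity) (by positivity), Real.pow_rpow_inv_natCast ha hn.ne']
  rfl

/-- The Brunn–Minkowski inequality for compact sets, from the multiplicative form applied to the
rescalings of `A` and `B` to unit volume. -/
theorem brunn_minkowski {n : ℕ} (hn : 0 < n) {A B : Set (EuclideanSpace ℝ (Fin n))}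
    (hA : IsCompact A) (hB : IsCompact B) (hA0 : A.Nonempty) (hB0 : B.Nonempty) :
    volume.real A ^ (n : ℝ)⁻¹ + volume.real B ^ (n : ℝ)⁻¹ ≤ volume.real (A + B) ^ (n : ℝ)⁻¹ := by
  have hn' : (n : ℝ)⁻¹ ≠ 0 := by positivity
  have hAB : IsCompact (A + B) := hA.add hB
  set α := volume.real A ^ (n : ℝ)⁻¹ with hα
  set β := volume.real B ^ (n : ℝ)⁻¹ with hβ
  have hα0 : 0 ≤ α := by positivity
  have hβ0 : 0 ≤ β := by positivity
  rcases hα0.eq_or_lt with h0 | hαp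
  · obtain ⟨a, ha⟩ := hA0
    rw [← h0, zero_add, hβ]
    refine Real.rpow_le_rpow (by positivity) ?_ (by positivity)
    have : volume.real ((fun x => a + x) '' B) = volume.real B := by
      rw [image_add_left, Measure.real, measure_preimage_add, Measure.real]
    rw [← this]
    refine measureReal_mono ?_ hAB.measure_ne_top
    rintro _ ⟨y, hy, rfl⟩
    exact ⟨a, ha, y, hy, rfl⟩
  rcases hβ0.eq_or_lt with h0 | hβp
  · obtain ⟨b, hb⟩ := hB0
    rw [← h0, add_zero, hα]
    refine Real.rpow_le_rpow (by positivity) ?_ (by positivity)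
    have : volume.real ((fun x => b + x) '' A) = volume.real A := by
      rw [image_add_left, Measure.real, measure_preimage_add, Measure.real]
    rw [← this]
    refine measureReal_mono ?_ hAB.measure_ne_top
    rintro _ ⟨y, hy, rfl⟩
    exact ⟨y, hy, b, hb, add_comm _ _⟩
  have unit : ∀ A : Set (EuclideanSpace ℝ (Fin n)), IsCompact A →
      0 < volume.real A ^ (n : ℝ)⁻¹ → volume ((volume.real A ^ (n : ℝ)⁻¹)⁻¹ • A) = 1 := by
    intro A hA h
    have h1 := volume_smul_rpow hn A (inv_nonneg.2 h.le)
    rw [inv_mul_cancel₀ h.ne'] at h1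
    have h2 : volume.real ((volume.real A ^ (n : ℝ)⁻¹)⁻¹ • A) = 1 := by
      rw [← Real.rpow_inv_natCast_pow (n := n) (x := volume.real _) (by positivity) hn.ne', h1,
        one_pow]
    rwa [Measure.real, ENNReal.toReal_eq_one_iff] at h2
  have hsum : 0 < α + β := by positivity
  have key := brunn_minkowski_mul (hA.smul α⁻¹) (hB.smul β⁻¹) (s := α / (α + β))
    (t := β / (α + β)) (by positivity) (by positivity) (by field_simp)
  rw [unit A hA hαp, unit B hB hβp, ENNReal.one_rpow, ENNReal.one_rpow, one_mul] at key
  have hset : (α / (α + β)) • α⁻¹ • A + (β / (α + β)) • β⁻¹ • B = (α + β)⁻¹ • (A + B) := by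
    rw [smul_smul, smul_smul, smul_add]
    congr 2 <;> field_simp
  rw [hset] at key
  have hreal : 1 ≤ volume.real ((α + β)⁻¹ • (A + B)) := by
    have := ENNReal.toReal_mono (hAB.smul (α + β)⁻¹).measure_ne_top key
    rwa [ENNReal.toReal_one] at this
  have h3 := Real.one_le_rpow hreal (z := (n : ℝ)⁻¹) (by positivity)
  rw [volume_smul_rpow hn _ (by positivity)] at h3
  rwa [inv_mul_eq_div, one_le_div hsum] at h3

/-! ### The overlap volume -/

/-- The part of `K` covered by the translate of `L` by `z`, that is `K ∩ (z + L)`. -/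
def overlap {n : ℕ} (K L : Set (EuclideanSpace ℝ (Fin n))) (z : EuclideanSpace ℝ (Fin n)) :
    Set (EuclideanSpace ℝ (Fin n)) :=
  K ∩ {x | x - z ∈ L}

section Overlap

variable {n : ℕ} {K L : Set (EuclideanSpace ℝ (Fin n))}

lemma overlap_zero : overlap K L 0 = K ∩ L := by simp [overlap]

lemma isCompact_overlap (hK : IsCompact K) (hL : IsCompact L) (z : EuclideanSpace ℝ (Fin n)) :
    IsCompact (overlap K L z) :=
  hK.inter_right (hL.isClosed.preimage (continuous_id.sub continuous_const))

lemma isCompact_sub (hK : IsCompact K) (hL : IsCompact L) : IsCompact (K - L) := by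
  rw [sub_eq_add_neg]
  exact hK.add hL.neg

lemma overlap_nonempty_iff {z : EuclideanSpace ℝ (Fin n)} :
    (overlap K L z).Nonempty ↔ z ∈ K - L := by
  constructor
  · rintro ⟨x, hx, hxz⟩
    exact ⟨x, hx, x - z, hxz, by simp⟩
  · rintro ⟨x, hx, y, hy, rfl⟩
    exact ⟨x, hx, by simpa using hy⟩

/-- Continuity of the overlap volume: the boundary of a convex set is null, so dominated
convergence applies to the indicator functions. -/
lemma continuous_volume_overlap (hK : IsCompact K) (hL : IsCompact L) (hLconv : Convex ℝ L) :
    Continuous fun z => volume.real (overlap K L z) := by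
  have hLm : ∀ z : EuclideanSpace ℝ (Fin n), MeasurableSet {x | x - z ∈ L} := fun z =>
    (hL.isClosed.preimage (continuous_id.sub continuous_const)).measurableSet
  have e : ∀ z, volume.real (overlap K L z) =
      ∫ x in K, L.indicator (fun _ => (1 : ℝ)) (x - z) := by
    intro z
    have : (fun x => L.indicator (fun _ => (1 : ℝ)) (x - z)) =
        {x | x - z ∈ L}.indicator 1 := by
      funext x; simp [indicator]
    rw [this, integral_indicator_one (hLm z), measureReal_restrict_apply (hLm z), overlap,
      inter_comm]
  simp_rw [e]
  rw [continuous_iff_continuousAt]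
  intro z₀
  refine continuousAt_of_dominated (bound := fun _ => 1) (Eventually.of_forall fun z => ?_)
    (Eventually.of_forall fun z => ae_of_all _ fun x => ?_) ?_ ?_
  · exact ((measurable_const.indicator hL.measurableSet).comp
      (measurable_id.sub_const z)).aestronglyMeasurable
  · by_cases hx : x - z ∈ L <;> simp [hx]
  · have : IsFiniteMeasure (volume.restrict K) := ⟨by simpa using hK.measure_lt_top⟩
    exact integrable_const _
  · refine ae_restrict_of_ae ?_
    have h0 : ∀ᵐ x ∂(volume : Measure (EuclideanSpace ℝ (Fin n))), x ∉ frontier L :=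
      measure_eq_zero_iff_ae_notMem.1 (hLconv.addHaar_frontier volume)
    have h1 : ∀ᵐ x ∂(volume : Measure (EuclideanSpace ℝ (Fin n))), x - z₀ ∉ frontier L :=
      (measurePreserving_sub_right volume z₀).quasiMeasurePreserving.ae h0
    filter_upwards [h1] with x hx
    have hc : ContinuousAt (L.indicator fun _ => (1 : ℝ)) (x - z₀) := by
      by_cases hxL : x - z₀ ∈ L
      · have hxi : x - z₀ ∈ interior L := by
          by_contra hxi
          exact hx ⟨subset_closure hxL, hxi⟩
        refine continuousAt_const.congr (f := fun _ => (1 : ℝ)) ?_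
        filter_upwards [mem_interior_iff_mem_nhds.1 hxi] with y hy
        simp [hy]
      · refine continuousAt_const.congr (f := fun _ => (0 : ℝ)) ?_
        filter_upwards [hL.isClosed.isOpen_compl.mem_nhds hxL] with y hy
        exact (indicator_of_notMem hy _).symm
    exact hc.comp (f := fun z => x - z) (continuousAt_const.sub continuousAt_id)

/-- The `n`-th root of the overlap volume is concave on `K - L`, by the Brunn–Minkowski
inequality and the inclusion
`a (K ∩ (z + L)) + b (K ∩ (w + L)) ⊆ K ∩ (a z + b w + L)`. -/
lemma concaveOn_volume_overlap (hn : 0 < n) (hK : IsCompact K) (hL : IsCompact L)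
    (hKconv : Convex ℝ K) (hLconv : Convex ℝ L) :
    ConcaveOn ℝ (K - L) fun z => volume.real (overlap K L z) ^ (n : ℝ)⁻¹ := by
  refine ⟨hKconv.sub hLconv, fun z hz w hw a b ha hb hab => ?_⟩
  have hz' := overlap_nonempty_iff.2 hz
  have hw' := overlap_nonempty_iff.2 hw
  have cz := isCompact_overlap hK hL z
  have cw := isCompact_overlap hK hL w
  simp only [smul_eq_mul]
  rw [← volume_smul_rpow hn _ ha, ← volume_smul_rpow hn _ hb]
  refine (brunn_minkowski hn (cz.smul a) (cw.smul b) hz'.smul_set hw'.smul_set).trans ?_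
  refine Real.rpow_le_rpow (by positivity) (measureReal_mono ?_
    (isCompact_overlap hK hL _).measure_ne_top) (by positivity)
  rintro _ ⟨_, ⟨x, hx, rfl⟩, _, ⟨y, hy, rfl⟩, rfl⟩
  refine ⟨hKconv hx.1 hy.1 ha hb hab, ?_⟩
  have := hLconv hx.2 hy.2 ha hb hab
  simp only [mem_ofPred_eq]
  convert this using 1
  module

/-- The law of `x - y`, for `(x, y)` distributed on `K × L`, has the overlap volume as density. -/
lemma lintegral_sub_eq (hL : IsCompact L)
    {φ : EuclideanSpace ℝ (Fin n) → ℝ≥0∞} (hφ : Measurable φ) :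
    ∫⁻ p, φ (p.1 - p.2) ∂((volume.restrict K).prod (volume.restrict L)) =
      ∫⁻ z, φ z * volume (overlap K L z) := by
  have hLm : ∀ z : EuclideanSpace ℝ (Fin n), MeasurableSet {x | x - z ∈ L} := fun z =>
    (hL.isClosed.preimage (continuous_id.sub continuous_const)).measurableSet
  have hφs : Measurable fun p : EuclideanSpace ℝ (Fin n) × EuclideanSpace ℝ (Fin n) =>
    φ (p.1 - p.2) := hφ.comp (measurable_fst.sub measurable_snd)
  have hind : Measurable (L.indicator fun _ => (1 : ℝ≥0∞)) :=
    measurable_const.indicator hL.measurableSet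
  rw [lintegral_prod _ hφs.aemeasurable]
  have inner : ∀ x, ∫⁻ y in L, φ (x - y) =
      ∫⁻ z, φ z * L.indicator (fun _ => (1 : ℝ≥0∞)) (x - z) := by
    intro x
    rw [← lintegral_indicator hL.measurableSet,
      ← lintegral_sub_left_eq_self (fun z => φ z * L.indicator (fun _ => (1 : ℝ≥0∞)) (x - z)) x]
    refine lintegral_congr fun y => ?_
    by_cases hy : y ∈ L <;> simp [hy]
  simp_rw [inner]
  rw [lintegral_lintegral_swap]
  · refine lintegral_congr fun z => ?_
    have : (fun x => L.indicator (fun _ => (1 : ℝ≥0∞)) (x - z)) =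
        {x | x - z ∈ L}.indicator 1 := by
      funext x; simp [indicator]
    have hm : Measurable fun x => L.indicator (fun _ => (1 : ℝ≥0∞)) (x - z) :=
      hind.comp (measurable_id.sub_const z)
    rw [lintegral_const_mul _ hm, this,
      lintegral_indicator_one (hLm z), Measure.restrict_apply (hLm z), overlap, inter_comm]
  · exact ((hφ.comp measurable_snd).mul
      (hind.comp (measurable_fst.sub measurable_snd))).aemeasurable

lemma integral_sub_eq (hK : IsCompact K) (hL : IsCompact L) (hLconv : Convex ℝ L)
    {φ : EuclideanSpace ℝ (Fin n) → ℝ} (hφ : Continuous φ) (hφ0 : ∀ z, 0 ≤ φ z) :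
    ∫ p, φ (p.1 - p.2) ∂((volume.restrict K).prod (volume.restrict L)) =
      ∫ z in K - L, φ z * volume.real (overlap K L z) := by
  have hf := continuous_volume_overlap hK hL hLconv
  rw [integral_eq_lintegral_of_nonneg_ae (ae_of_all _ fun p => hφ0 _)
      (Continuous.aestronglyMeasurable (by fun_prop)),
    integral_eq_lintegral_of_nonneg_ae
      (ae_of_all _ fun z => mul_nonneg (hφ0 _) measureReal_nonneg)
      (hφ.mul hf).aestronglyMeasurable,
    lintegral_sub_eq hL (φ := fun z => ENNReal.ofReal (φ z)) (by fun_prop),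
    ← lintegral_indicator (isCompact_sub hK hL).measurableSet]
  congr 1
  refine lintegral_congr fun z => ?_
  by_cases hz : z ∈ K - L
  · rw [indicator_of_mem hz, ENNReal.ofReal_mul (hφ0 z),
      ofReal_measureReal (isCompact_overlap hK hL z).measure_ne_top]
  · rw [indicator_of_notMem hz, not_nonempty_iff_eq_empty.1 (mt overlap_nonempty_iff.1 hz)]
    simp

end Overlap

/-! ### The volume inequality -/

/-- Weighted AM–GM for `n` copies of `g ^ (n + 1)` and one of `m ^ (n + 1)`. -/
lemma succ_mul_pow_le {g m : ℝ} (hg : 0 ≤ g) (hm : 0 ≤ m) (n : ℕ) :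
    (n + 1) * (m * g ^ n) ≤ n * g ^ (n + 1) + m ^ (n + 1) := by
  induction n with
  | zero => simp
  | succ n ih =>
    have h1 := mul_le_mul_of_nonneg_left ih hg
    have h2 : 0 ≤ (g ^ (n + 1) - m ^ (n + 1)) * (g - m) := by
      rcases le_total g m with h | h
      · exact mul_nonneg_of_nonpos_of_nonpos
          (sub_nonpos.2 (pow_le_pow_left₀ hg h _)) (sub_nonpos.2 h)
      · exact mul_nonneg (sub_nonneg.2 (pow_le_pow_left₀ hm h _)) (sub_nonneg.2 h)
    push_cast
    ring_nf at h1 h2 ⊢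
    linarith

/-- The Milman–Pajor inequality in terms of volumes. -/
lemma volume_mul_volume_le {n : ℕ} (hn : 0 < n) {K L : Set (EuclideanSpace ℝ (Fin n))}
    (hK : IsCompact K) (hKconv : Convex ℝ K) (hKint : (interior K).Nonempty)
    (hL : IsCompact L) (hLconv : Convex ℝ L) (hLint : (interior L).Nonempty)
    (hcenter : centerOfMass K = centerOfMass L) :
    volume.real K * volume.real L ≤ volume.real (K ∩ L) * volume.real (K - L) := by
  have hDc : IsCompact (K - L) := isCompact_sub hK hL
  have hKpos : 0 < volume.real K := ENNReal.toReal_pos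
    (Measure.measure_pos_of_nonempty_interior _ hKint).ne' hK.measure_ne_top
  have hLpos : 0 < volume.real L := ENNReal.toReal_pos
    (Measure.measure_pos_of_nonempty_interior _ hLint).ne' hL.measure_ne_top
  have fK : IsFiniteMeasure (volume.restrict K) := ⟨by simpa using hK.measure_lt_top⟩
  have fL : IsFiniteMeasure (volume.restrict L) := ⟨by simpa using hL.measure_lt_top⟩
  set ν := (volume.restrict K).prod (volume.restrict L) with hν
  set V := volume.real K * volume.real L with hV
  have hVpos : 0 < V := by positivity
  have hνV : ν.real univ = V := by
    rw [hν, ← univ_prod_univ, measureReal_prod_prod]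
    simp [hV]
  have hν0 : NeZero ν := ⟨fun h => by simp [h] at hνV; exact hVpos.ne hνV⟩
  set f := fun z => volume.real (overlap K L z) with hf
  set g := fun z => f z ^ (n : ℝ)⁻¹ with hg
  have hfc : Continuous f := continuous_volume_overlap hK hL hLconv
  have hgc : Continuous g := hfc.rpow_const fun _ => Or.inr (by positivity)
  have hf0 : ∀ z, 0 ≤ f z := fun z => measureReal_nonneg
  have hg0 : ∀ z, 0 ≤ g z := fun z => Real.rpow_nonneg (hf0 z) _
  have hgf : ∀ z, g z ^ n = f z := fun z => Real.rpow_inv_natCast_pow (hf0 z) hn.ne'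
  have hmem : ∀ᵐ p ∂ν, p.1 ∈ K ∧ p.2 ∈ L := by
    rw [hν, Measure.prod_restrict]
    exact ae_restrict_mem (hK.measurableSet.prod hL.measurableSet)
  have hsub : ∀ᵐ p ∂ν, p.1 - p.2 ∈ K - L := by
    filter_upwards [hmem] with p hp
    exact ⟨_, hp.1, _, hp.2, rfl⟩
  have iK : Integrable (fun x : EuclideanSpace ℝ (Fin n) => x) (volume.restrict K) :=
    continuous_id.continuousOn.integrableOn_compact hK
  have iL : Integrable (fun x : EuclideanSpace ℝ (Fin n) => x) (volume.restrict L) :=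
    continuous_id.continuousOn.integrableOn_compact hL
  have i1 : Integrable (fun p => p.1) ν := iK.comp_fst _
  have i2 : Integrable (fun p => p.2) ν := iL.comp_snd _
  have hint : Integrable (fun p => p.1 - p.2) ν := i1.sub i2
  have hgint : Integrable (g ∘ fun p => p.1 - p.2) ν := by
    obtain ⟨C, hC⟩ := hDc.exists_bound_of_continuousOn hgc.continuousOn
    refine Integrable.of_bound (hgc.comp (continuous_fst.sub continuous_snd)).aestronglyMeasurable
      C ?_
    filter_upwards [hsub] with p hp
    exact hC _ hp
  have hbary : ⨍ p, (p.1 - p.2) ∂ν = 0 := by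
    rw [average_eq, hνV, integral_sub i1 i2, hν, integral_fun_fst (fun x => x),
      integral_fun_snd (fun x => x)]
    simp only [measureReal_restrict_apply_univ]
    have hc : (volume.real K)⁻¹ • ∫ x in K, x = (volume.real L)⁻¹ • ∫ x in L, x := hcenter
    have hc2 := congrArg (fun v => V • v) hc
    simp only [smul_smul] at hc2
    have e1 : V * (volume.real K)⁻¹ = volume.real L := by rw [hV]; field_simp
    have e2 : V * (volume.real L)⁻¹ = volume.real K := by rw [hV]; field_simp
    rw [e1, e2] at hc2
    rw [hc2, sub_self, smul_zero]
  have jensen := (concaveOn_volume_overlap hn hK hL hKconv hLconv).le_map_average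
    hgc.continuousOn hDc.isClosed hsub hint hgint
  rw [hbary, average_eq, hνV, smul_eq_mul, inv_mul_le_iff₀ hVpos,
    integral_sub_eq hK hL hLconv hgc hg0] at jensen
  have hVint : V = ∫ z in K - L, f z := by
    have := integral_sub_eq hK hL hLconv (φ := fun _ => 1) continuous_const fun _ => zero_le_one
    simpa [← hν, hνV] using this
  have hDpos : 0 < volume.real (K - L) := by
    refine measureReal_nonneg.lt_of_ne fun h => hVpos.ne' ?_
    rw [hVint]
    refine setIntegral_measure_zero _ ?_
    rw [Measure.real, eq_comm, ENNReal.toReal_eq_zero_iff] at h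
    exact h.resolve_right hDc.measure_ne_top
  -- `m ^ n` is the mean value of the overlap volume over `K - L`.
  set m := (V / volume.real (K - L)) ^ (n : ℝ)⁻¹ with hm
  have hm0 : 0 < m := by positivity
  have hmn : m ^ n = V / volume.real (K - L) := Real.rpow_inv_natCast_pow (by positivity) hn.ne'
  have young : ((n : ℝ) + 1) * (m * V) ≤ n * (∫ z in K - L, g z * f z) +
      m ^ (n + 1) * volume.real (K - L) := by
    have ig : IntegrableOn (fun z => g z * f z) (K - L) :=
      (hgc.mul hfc).continuousOn.integrableOn_compact hDc
    have ic : IntegrableOn (fun _ : EuclideanSpace ℝ (Fin n) => m ^ (n + 1)) (K - L) :=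
      continuous_const.continuousOn.integrableOn_compact hDc
    have ifm : IntegrableOn (fun z => ((n : ℝ) + 1) * (m * f z)) (K - L) :=
      (Continuous.continuousOn (by fun_prop)).integrableOn_compact hDc
    have h1 : ∫ z in K - L, ((n : ℝ) + 1) * (m * f z) ≤
        ∫ z in K - L, (n * (g z * f z) + m ^ (n + 1)) := by
      refine integral_mono ifm ((ig.const_mul _).add ic) fun z => ?_
      have := succ_mul_pow_le (hg0 z) hm0.le n
      rwa [pow_succ' (g z), hgf] at this
    rw [integral_const_mul, integral_const_mul, ← hVint,
      integral_add (ig.const_mul _) ic, integral_const_mul, integral_const,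
      measureReal_restrict_apply_univ, smul_eq_mul] at h1
    linarith
  have hmle : m ≤ g 0 := by
    have e : m ^ (n + 1) * volume.real (K - L) = m * V := by
      rw [pow_succ, hmn]; field_simp
    have hjen := mul_le_mul_of_nonneg_left jensen (Nat.cast_nonneg (α := ℝ) n)
    have hnV : 0 < (n : ℝ) * V := by positivity
    refine le_of_mul_le_mul_left ?_ hnV
    change (n : ℝ) * (∫ z in K - L, g z * f z) ≤ n * (V * g 0) at hjen
    linarith
  have hfin := pow_le_pow_left₀ hm0.le hmle n
  rw [hmn, hgf, div_le_iff₀ hDpos] at hfin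
  simpa [hf, overlap_zero] using hfin

/-- **Milman–Pajor inequality.** If `K` and `L` are convex bodies in `ℝ^n`
with the same center of mass, then `vrad(K ∩ L) · vrad(K − L) ≥ vrad(K) · vrad(L)`,
where `K − L = {x − y : x ∈ K, y ∈ L}`. -/
theorem milman_pajor (n : ℕ) (hn : 0 < n)
    (K L : Set (EuclideanSpace ℝ (Fin n)))
    (hKcompact : IsCompact K) (hKconv : Convex ℝ K) (hKint : (interior K).Nonempty)
    (hLcompact : IsCompact L) (hLconv : Convex ℝ L) (hLint : (interior L).Nonempty)
    (hcenter : centerOfMass K = centerOfMass L) :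
    volRad K * volRad L ≤ volRad (K ∩ L) * volRad (K - L) := by
  have h := volume_mul_volume_le hn hKcompact hKconv hKint hLcompact hLconv hLint hcenter
  simp only [volRad]
  rw [← Real.mul_rpow (by positivity) (by positivity),
    ← Real.mul_rpow (by positivity) (by positivity)]
  refine Real.rpow_le_rpow (by positivity) ?_ (by positivity)
  rw [div_mul_div_comm, div_mul_div_comm]
  exact div_le_div_of_nonneg_right h (by positivity)
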